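/- Let G be a finite unweighted graph without isolated vertices, let λ₁ ≤ ⋯ ≤ λ_n be the min-max eigenvalues of the normalized signless 1-Laplacian Δ₁⁺, and let t = #{k : λ_k = 1} be the multiplicity of the eigenvalue 1. Then (1) α(G) ≤ t ≤ η(G), where α(G) is the independence number and η(G) is the edge covering number of G; and (2) if G is moreover bipartite and connected, then t = α(G). -/

import Mathlib

open Finset

noncomputable section

/-- The set-valued sign function: `{1}` if `t > 0`, `{-1}` if `t < 0`, `[-1,1]` if `t = 0`. -/
def Sgn (t : ℝ) : Set ℝ := if 0 < t then {1} else if t < 0 then {-1} else Set.Icc (-1) 1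

variable {n : ℕ}

/-- The degree `d_i` of vertex `i` (unit edge weights), as a real number. -/
def degR (G : SimpleGraph (Fin n)) [DecidableRel G.Adj] (i : Fin n) : ℝ := (G.degree i : ℝ)

/-- `vol(V) = Σ_i d_i`. -/
def volV (G : SimpleGraph (Fin n)) [DecidableRel G.Adj] : ℝ := ∑ i, degR G i

/-- `I⁺(x) = Σ_{{i,j} ∈ E} |x_i + x_j|`. -/
def IplusU (G : SimpleGraph (Fin n)) [DecidableRel G.Adj] (x : Fin n → ℝ) : ℝ :=
  (∑ i, ∑ j, if G.Adj i j then |x i + x j| else 0) / 2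

/-- `(λ, x)` with `x ≠ 0` is an eigenpair of the signless 1-Laplacian `Δ₁⁺`:
there are `z_{ij} ∈ Sgn(x_i + x_j)` with `z_{ij} = z_{ji}` and `v_i ∈ Sgn(x_i)` such that
`Σ_{j ∼ i} z_{ij} = λ d_i v_i` for all `i`. -/
def IsEigenSignless (G : SimpleGraph (Fin n)) [DecidableRel G.Adj]
    (lam : ℝ) (x : Fin n → ℝ) : Prop :=
  x ≠ 0 ∧ ∃ z : Fin n → Fin n → ℝ,
    (∀ i j, G.Adj i j → z i j ∈ Sgn (x i + x j)) ∧
    (∀ i j, z i j = z j i) ∧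
    ∃ v : Fin n → ℝ, (∀ i, v i ∈ Sgn (x i)) ∧
      ∀ i, (∑ j, if G.Adj i j then z i j else 0) = lam * degR G i * v i

/-- `D` is the vertex set of a connected component of the subgraph of `G` induced by `P`. -/
def IsCompIn (G : SimpleGraph (Fin n)) (P : Set (Fin n)) (D : Set (Fin n)) : Prop :=
  ∃ v ∈ P, D = {u | Relation.ReflTransGen (fun a b => G.Adj a b ∧ a ∈ P ∧ b ∈ P) v u}

/-- The number `S(x)` of nodal domains of `x`: connected components of the support. -/
def nodalCount (G : SimpleGraph (Fin n)) (x : Fin n → ℝ) : ℕ :=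
  Set.ncard {D : Set (Fin n) | IsCompIn G {i | x i ≠ 0} D}

/-- There is a continuous odd nonvanishing map from `A` into `ℝᵐ ∖ {0}`. -/
def HasOddMap (A : Set (Fin n → ℝ)) (m : ℕ) : Prop :=
  ∃ f : (Fin n → ℝ) → (Fin m → ℝ),
    ContinuousOn f A ∧ (∀ x ∈ A, f (-x) = -f x) ∧ ∀ x ∈ A, f x ≠ 0

/-- `γ(A) ≥ k`, where `γ` is the Krasnoselskii genus: the least `m` admitting a
continuous odd nonvanishing map `A → ℝᵐ ∖ {0}` (with `γ(∅) = 0`, `γ(A) = +∞` if none). -/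
def GenusGe (A : Set (Fin n → ℝ)) (k : ℕ) : Prop := ∀ m, HasOddMap A m → k ≤ m

/-- The `k`-th min-max value of a functional `Φ`:
`inf { sup_{x ∈ A} Φ(x) : A ⊆ ℝⁿ∖{0} symmetric compact, γ(A) ≥ k }`. -/
def minimaxVal (Phi : (Fin n → ℝ) → ℝ) (k : ℕ) : ℝ :=
  sInf {r : ℝ | ∃ A : Set (Fin n → ℝ), IsCompact A ∧ (∀ x ∈ A, -x ∈ A) ∧
    (0 : Fin n → ℝ) ∉ A ∧ GenusGe A k ∧ r = sSup (Phi '' A)}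

/-- The Rayleigh quotient `I⁺(x) / Σ_i d_i |x_i|` of the signless 1-Laplacian. -/
def RayleighPlus (G : SimpleGraph (Fin n)) [DecidableRel G.Adj] (x : Fin n → ℝ) : ℝ :=
  IplusU G x / ∑ i, degR G i * |x i|

/-- The `k`-th min-max eigenvalue `c_k` of the (normalized) signless 1-Laplacian `Δ₁⁺`. -/
def ckSignless (G : SimpleGraph (Fin n)) [DecidableRel G.Adj] (k : ℕ) : ℝ :=
  minimaxVal (RayleighPlus G) k

/-- The independence number `α(G)`: maximum size of a set of mutually non-adjacent vertices. -/
def indepNum (G : SimpleGraph (Fin n)) : ℕ :=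
  sSup {k : ℕ | ∃ S : Finset (Fin n), S.card = k ∧ ∀ i ∈ S, ∀ j ∈ S, ¬ G.Adj i j}

/-- The edge covering number `η(G)`: minimum size of a set of edges covering all vertices. -/
def edgeCoverNum (G : SimpleGraph (Fin n)) : ℕ :=
  sInf {k : ℕ | ∃ F : Finset (Sym2 (Fin n)), ↑F ⊆ G.edgeSet ∧
    (∀ v : Fin n, ∃ e ∈ F, v ∈ e) ∧ F.card = k}

/-!
For `x ≠ 0` the Rayleigh quotient is at most `1`, with equality iff no edge joins two vertices at
which `x` has opposite strict signs. Hence it is constantly `1` on the nonzero vectors supported on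
an independent set, and less than `1` on the nonzero vectors spanned by the differences of the two
unit vectors at the ends of each edge of a matching. By the Borsuk-Ulam theorem the unit sphere of a
`k`-dimensional subspace has genus at least `k`, and by linear algebra a set of genus at least `k`
meets every subspace of codimension less than `k`; so, as in the Courant-Fischer theorem, linear
subspaces bound the min-max values: `λ_k = 1` for `k > n - α`, and `λ_k < 1` for `k ≤ ν`, where `ν`
is the size of a maximum matching. This gives `α ≤ t ≤ n - ν`. Gallai's `n ≤ η + ν` bounds `t` by
`η`, and in the bipartite case König's `n ≤ ν + α` bounds it by `α`.

The Borsuk-Ulam theorem for `f` with `m` coordinates is a mod 2 cup product computation. The sign of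
each coordinate is an odd `0`-cochain, and the cup product of the coboundaries of `m` odd cochains
takes the value `1` on an `m`-dimensional hemisphere. So some simplex of the hemisphere sees a sign
change of every coordinate, and after enough barycentric subdivisions `f` is almost zero there.
-/

/-- Chains mod 2 of ordered simplices, a simplex being the list of its vertices (repetitions are
allowed). The empty list is the `(-1)`-simplex of the augmented chain complex. -/
abbrev OrderedChain (X : Type*) := List X →₀ ZMod 2

namespace OrderedChain

section Complex

variable {X Y : Type*}

/-- The chain consisting of one simplex. -/
abbrev simplex (s : List X) : OrderedChain X := Finsupp.single s 1

/-- The chains all of whose simplices lie in `T`. -/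
abbrev supportedIn (T : Set (List X)) : Submodule (ZMod 2) (OrderedChain X) :=
  Finsupp.supported (ZMod 2) (ZMod 2) T

/-- The codimension-one faces of a simplex. -/
def faces : List X → List (List X)
  | [] => []
  | v :: s => s :: (faces s).map (v :: ·)

/-- The boundary operator of the augmented chain complex. -/
def boundary : OrderedChain X →ₗ[ZMod 2] OrderedChain X :=
  Finsupp.linearCombination (ZMod 2) fun s => ((faces s).map simplex).sum

/-- The cone with apex `v`. -/
def cone (v : X) : OrderedChain X →ₗ[ZMod 2] OrderedChain X :=
  Finsupp.lmapDomain (ZMod 2) (ZMod 2) (v :: ·)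

/-- The push-forward of chains along a map of the vertices. -/
def map (g : X → Y) : OrderedChain X →ₗ[ZMod 2] OrderedChain Y :=
  Finsupp.lmapDomain (ZMod 2) (ZMod 2) (List.map g)

/-- The evaluation of chains on a cochain `φ`. -/
def eval (φ : List X → ZMod 2) : OrderedChain X →ₗ[ZMod 2] ZMod 2 :=
  Finsupp.linearCombination (ZMod 2) φ

theorem boundary_simplex (s : List X) : boundary (simplex s) = ((faces s).map simplex).sum := by
  simp [boundary]

@[simp]
theorem cone_simplex (v : X) (s : List X) : cone v (simplex s) = simplex (v :: s) := by
  simp [cone]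

@[simp]
theorem map_simplex (g : X → Y) (s : List X) : map g (simplex s) = simplex (s.map g) := by
  simp [map]

@[simp]
theorem eval_simplex (φ : List X → ZMod 2) (s : List X) : eval φ (simplex s) = φ s := by
  simp [eval]

@[simp]
theorem boundary_simplex_nil : boundary (simplex ([] : List X)) = 0 := by
  simp [boundary_simplex, faces]

theorem simplex_mem_supportedIn {T : Set (List X)} {s : List X} (hs : s ∈ T) :
    simplex s ∈ supportedIn T :=
  Finsupp.single_mem_supported _ _ hs

theorem linearMap_mem_of_mem_supportedIn {M : Type*} [AddCommGroup M] [Module (ZMod 2) M]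
    {L : OrderedChain X →ₗ[ZMod 2] M} {N : Submodule (ZMod 2) M} {T : Set (List X)}
    (h : ∀ s ∈ T, L (simplex s) ∈ N) {c : OrderedChain X} (hc : c ∈ supportedIn T) : L c ∈ N := by
  rw [supportedIn, Finsupp.supported_eq_span_single] at hc
  exact Submodule.span_le (p := N.comap L).2 (Set.forall_mem_image.2 h) hc

theorem linearMap_eq_of_mem_supportedIn {M : Type*} [AddCommGroup M] [Module (ZMod 2) M]
    {L L' : OrderedChain X →ₗ[ZMod 2] M} {T : Set (List X)}
    (h : ∀ s ∈ T, L (simplex s) = L' (simplex s)) {c : OrderedChain X} (hc : c ∈ supportedIn T) :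
    L c = L' c :=
  linearMap_mem_of_mem_supportedIn (N := LinearMap.eqLocus L L') (L := LinearMap.id) h hc

theorem linearMap_ext {M : Type*} [AddCommGroup M] [Module (ZMod 2) M]
    {L L' : OrderedChain X →ₗ[ZMod 2] M} (h : ∀ s, L (simplex s) = L' (simplex s)) : L = L' :=
  Finsupp.lhom_ext' fun s => LinearMap.ext_ring (h s)

theorem boundary_cone (v : X) (c : OrderedChain X) :
    boundary (cone v c) = c + cone v (boundary c) := by
  suffices boundary ∘ₗ cone v = LinearMap.id + cone v ∘ₗ boundary from LinearMap.congr_fun this c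
  refine linearMap_ext fun s => ?_
  simp [boundary_simplex, faces, map_list_sum, Function.comp_def]

theorem boundary_boundary (c : OrderedChain X) : boundary (boundary c) = 0 := by
  suffices boundary ∘ₗ boundary = (0 : OrderedChain X →ₗ[ZMod 2] _) from
    LinearMap.congr_fun this c
  refine linearMap_ext fun s => ?_
  induction s with
  | nil => simp
  | cons v s ih =>
    simp only [LinearMap.comp_apply, LinearMap.zero_apply] at ih ⊢
    rw [← cone_simplex, boundary_cone, map_add, boundary_cone, ih, map_zero, add_zero,
      ZModModule.add_self]

theorem map_cone (g : X → Y) (v : X) (c : OrderedChain X) :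
    map g (cone v c) = cone (g v) (map g c) := by
  suffices map g ∘ₗ cone v = cone (g v) ∘ₗ map g from LinearMap.congr_fun this c
  exact linearMap_ext fun s => by simp

theorem boundary_map (g : X → Y) (c : OrderedChain X) :
    boundary (map g c) = map g (boundary c) := by
  suffices boundary ∘ₗ map g = map g ∘ₗ boundary from LinearMap.congr_fun this c
  refine linearMap_ext fun s => ?_
  induction s with
  | nil => simp
  | cons v s ih =>
    simp only [LinearMap.comp_apply] at ih ⊢
    rw [← cone_simplex, map_cone, boundary_cone, boundary_cone, ih, map_add, map_cone]

theorem length_add_one_of_mem_faces {s t : List X} (ht : t ∈ faces s) :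
    t.length + 1 = s.length := by
  induction s generalizing t with
  | nil => simp [faces] at ht
  | cons v s ih =>
    rw [faces, List.mem_cons, List.mem_map] at ht
    obtain rfl | ⟨u, hu, rfl⟩ := ht
    · rfl
    · simpa using ih hu

theorem subset_of_mem_faces {s t : List X} (ht : t ∈ faces s) : t ⊆ s := by
  induction s generalizing t with
  | nil => simp [faces] at ht
  | cons v s ih =>
    rw [faces, List.mem_cons, List.mem_map] at ht
    obtain rfl | ⟨u, hu, rfl⟩ := ht
    · exact List.subset_cons_self v t
    · exact List.cons_subset_cons v (ih hu)

theorem boundary_simplex_mem_supportedIn (s : List X) :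
    boundary (simplex s) ∈ supportedIn {t | t ∈ faces s} := by
  rw [boundary_simplex]
  refine list_sum_mem fun c hc => ?_
  obtain ⟨t, ht, rfl⟩ := List.mem_map.1 hc
  exact simplex_mem_supportedIn ht

end Complex

section Subdivision

variable {X Y : Type*}

/-- The iterated cone decomposition of a simplex in which every face `t` receives the new
vertex `b t`. -/
def subdivideSimplex (b : List X → X) : List X → OrderedChain X
  | [] => simplex []
  | v :: s =>
    cone (b (v :: s)) ((faces (v :: s)).attach.map fun t => subdivideSimplex b t.1).sum
termination_by s => s.length
decreasing_by
  have := length_add_one_of_mem_faces t.2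
  omega

/-- The subdivision operator on chains; it is the barycentric subdivision when `b t` is the
barycenter of `t`. -/
def subdivide (b : List X → X) : OrderedChain X →ₗ[ZMod 2] OrderedChain X :=
  Finsupp.linearCombination (ZMod 2) (subdivideSimplex b)

@[simp]
theorem subdivide_simplex_nil (b : List X → X) : subdivide b (simplex []) = simplex [] := by
  simp [subdivide, subdivideSimplex]

theorem subdivide_simplex_of_ne_nil (b : List X → X) {s : List X} (hs : s ≠ []) :
    subdivide b (simplex s) = cone (b s) (subdivide b (boundary (simplex s))) := by
  obtain ⟨v, s, rfl⟩ := List.exists_cons_of_ne_nil hs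
  simp [subdivide, subdivideSimplex, boundary_simplex, map_list_sum, Function.comp_def]

theorem linearMap_boundary_simplex_eq {M : Type*} [AddCommGroup M] [Module (ZMod 2) M]
    {L L' : OrderedChain X →ₗ[ZMod 2] M} {s : List X}
    (h : ∀ t ∈ faces s, L (simplex t) = L' (simplex t)) :
    L (boundary (simplex s)) = L' (boundary (simplex s)) :=
  linearMap_eq_of_mem_supportedIn h (boundary_simplex_mem_supportedIn s)

theorem simplex_induction {P : List X → Prop} (nil : P [])
    (of_faces : ∀ s ≠ [], (∀ t ∈ faces s, P t) → P s) (s : List X) : P s := by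
  induction hk : s.length generalizing s with
  | zero => rwa [List.length_eq_zero_iff.1 hk]
  | succ k ih =>
    refine of_faces s (by rintro rfl; simp at hk) fun t ht => ih t ?_
    have := length_add_one_of_mem_faces ht
    omega

theorem boundary_subdivide (b : List X → X) (c : OrderedChain X) :
    boundary (subdivide b c) = subdivide b (boundary c) := by
  suffices boundary ∘ₗ subdivide b = subdivide b ∘ₗ boundary from LinearMap.congr_fun this c
  refine linearMap_ext fun s => ?_
  induction s using simplex_induction with
  | nil => simp
  | of_faces s hs ih =>
    have hcycle : boundary (subdivide b (boundary (simplex s))) = 0 := by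
      simpa [boundary_boundary] using linearMap_boundary_simplex_eq ih
    simp [subdivide_simplex_of_ne_nil b hs, boundary_cone, hcycle]

theorem subdivide_map {b : List X → X} {b' : List Y → Y} {g : X → Y}
    (hb : ∀ s, b' (s.map g) = g (b s)) (c : OrderedChain X) :
    subdivide b' (map g c) = map g (subdivide b c) := by
  suffices subdivide b' ∘ₗ map g = map g ∘ₗ subdivide b from LinearMap.congr_fun this c
  refine linearMap_ext fun s => ?_
  induction s using simplex_induction with
  | nil => simp
  | of_faces s hs ih =>
    have hfaces := linearMap_boundary_simplex_eq ih
    simp only [LinearMap.comp_apply, ← boundary_map, map_simplex] at hfaces ⊢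
    rw [subdivide_simplex_of_ne_nil b hs, subdivide_simplex_of_ne_nil b' (by simpa using hs),
      hfaces, hb, map_cone]

end Subdivision

section Hemispheres

variable {X : Type*}

/-- The boundary relations satisfied by the hemispheres of increasing dimension of a sphere whose
antipodal map is negation: `H k` is a `k`-dimensional hemisphere, and its boundary is the sphere
made of `H (k - 1)` and its antipode. -/
structure IsHemisphereFamily [Neg X] (H : ℕ → OrderedChain X) : Prop where
  boundary_zero : boundary (H 0) = simplex []
  boundary_succ (k : ℕ) : boundary (H (k + 1)) = H k + map Neg.neg (H k)

/-- The cup product of the coboundaries of the `0`-cochains `zs`. -/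
def crossing : List (X → ZMod 2) → List X → ZMod 2
  | [], [_] => 1
  | z :: zs, x :: y :: s => (z x + z y) * crossing zs (y :: s)
  | _, _ => 0

/-- The cup product of the `0`-cochain `z` and the coboundaries of the `0`-cochains `zs`. -/
def halfCrossing (z : X → ZMod 2) (zs : List (X → ZMod 2)) : List X → ZMod 2
  | [] => 0
  | x :: s => z x * crossing zs (x :: s)

theorem eval_boundary_simplex (φ : List X → ZMod 2) (s : List X) :
    eval φ (boundary (simplex s)) = ((faces s).map φ).sum := by
  simp [boundary_simplex, map_list_sum, Function.comp_def]

theorem eval_crossing_nil (c : OrderedChain X) : eval (crossing []) c = boundary c [] := by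
  suffices eval (crossing []) = Finsupp.lapply [] ∘ₗ boundary from LinearMap.congr_fun this c
  refine linearMap_ext fun s => ?_
  match s with
  | [] => simp [crossing]
  | [x] => simp [crossing, faces, boundary_simplex]
  | x :: y :: s =>
    have hnil : [] ∉ (faces (x :: y :: s)) := fun h => by
      simpa using length_add_one_of_mem_faces h
    simpa [crossing] using
      (Finsupp.notMem_support_iff.1 fun h =>
        hnil ((Finsupp.mem_supported _ _).1 (boundary_simplex_mem_supportedIn _) h)).symm

theorem eval_halfCrossing_boundary_of_cocycle {zs : List (X → ZMod 2)}
    (hzs : ∀ c, eval (crossing zs) (boundary c) = 0) (z : X → ZMod 2) (c : OrderedChain X) :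
    eval (halfCrossing z zs) (boundary c) = eval (crossing (z :: zs)) c := by
  suffices eval (halfCrossing z zs) ∘ₗ boundary = eval (crossing (z :: zs)) from
    LinearMap.congr_fun this c
  refine linearMap_ext fun s => ?_
  match s with
  | [] => simp [crossing]
  | [x] => simp [eval_boundary_simplex, faces, crossing, halfCrossing]
  | x :: y :: s =>
    have hx : crossing zs (y :: s) = ((faces (y :: s)).map fun t => crossing zs (x :: t)).sum := by
      have := hzs (simplex (x :: y :: s))
      rw [eval_boundary_simplex, faces, List.map_cons, List.sum_cons, List.map_map] at this
      exact CharTwo.add_eq_zero.1 this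
    rw [LinearMap.comp_apply, eval_boundary_simplex, faces, List.map_cons, List.sum_cons,
      List.map_map, eval_simplex, crossing]
    simp only [Function.comp_def, halfCrossing, List.sum_map_mul_left, ← hx]
    ring

theorem eval_crossing_boundary (zs : List (X → ZMod 2)) (c : OrderedChain X) :
    eval (crossing zs) (boundary c) = 0 := by
  induction zs generalizing c with
  | nil => simp [eval_crossing_nil, boundary_boundary]
  | cons z zs ih =>
    rw [← eval_halfCrossing_boundary_of_cocycle ih, boundary_boundary, map_zero]

theorem eval_crossing_cons (z : X → ZMod 2) (zs : List (X → ZMod 2)) (c : OrderedChain X) :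
    eval (crossing (z :: zs)) c = eval (halfCrossing z zs) (boundary c) :=
  (eval_halfCrossing_boundary_of_cocycle (eval_crossing_boundary zs) z c).symm

theorem crossing_map_neg [Neg X] {zs : List (X → ZMod 2)} {s : List X}
    (hodd : ∀ z ∈ zs, ∀ x ∈ s, z (-x) = z x + 1) :
    crossing zs (s.map Neg.neg) = crossing zs s := by
  induction zs generalizing s with
  | nil => rcases s with _ | ⟨x, _ | ⟨y, s⟩⟩ <;> rfl
  | cons z zs ih =>
    rcases s with _ | ⟨x, _ | ⟨y, s⟩⟩
    · rfl
    · rfl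
    · have ih' := ih (s := y :: s) fun z' hz' x' hx' =>
        hodd z' (List.mem_cons_of_mem z hz') x' (List.mem_cons_of_mem x hx')
      simp only [List.map_cons] at ih'
      rw [List.map_cons, List.map_cons, crossing, crossing, ih', hodd z (by simp) x (by simp),
        hodd z (by simp) y (by simp), add_add_add_comm, CharTwo.add_self_eq_zero, add_zero]

theorem eval_halfCrossing_map_neg [Neg X] {T : Set (List X)} {z : X → ZMod 2}
    {zs : List (X → ZMod 2)} (hz : ∀ s ∈ T, ∀ x ∈ s, z (-x) = z x + 1)
    (hzs : ∀ s ∈ T, ∀ w ∈ zs, ∀ x ∈ s, w (-x) = w x + 1)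
    {c : OrderedChain X} (hc : c ∈ supportedIn T) :
    eval (halfCrossing z zs) (map Neg.neg c) =
      eval (halfCrossing z zs) c + eval (crossing zs) c := by
  refine linearMap_eq_of_mem_supportedIn
    (L := eval (halfCrossing z zs) ∘ₗ map Neg.neg)
    (L' := eval (halfCrossing z zs) + eval (crossing zs)) (fun s hs => ?_) hc
  rcases s with _ | ⟨x, s⟩
  · cases zs <;> simp [halfCrossing, crossing]
  · have hx := crossing_map_neg (hzs _ hs)
    rw [List.map_cons] at hx
    simp [halfCrossing, hx, hz _ hs x, add_mul]

theorem IsHemisphereFamily.eval_crossing_eq_one [Neg X] {H : ℕ → OrderedChain X}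
    (hH : IsHemisphereFamily H) {T : Set (List X)} {zs : List (X → ZMod 2)}
    (hT : ∀ k ≤ zs.length, H k ∈ supportedIn T)
    (hodd : ∀ s ∈ T, ∀ z ∈ zs, ∀ x ∈ s, z (-x) = z x + 1) :
    eval (crossing zs) (H zs.length) = 1 := by
  induction zs with
  | nil => simp [eval_crossing_nil, hH.boundary_zero]
  | cons z zs ih =>
    have hzs : ∀ s ∈ T, ∀ w ∈ zs, ∀ x ∈ s, w (-x) = w x + 1 := fun s hs w hw =>
      hodd s hs w (List.mem_cons_of_mem z hw)
    rw [List.length_cons, eval_crossing_cons, hH.boundary_succ, map_add,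
      eval_halfCrossing_map_neg (fun s hs => hodd s hs z List.mem_cons_self) hzs
        (hT _ (Nat.le_succ _)),
      ← add_assoc, CharTwo.add_self_eq_zero, zero_add,
      ih (fun k hk => hT k (hk.trans (Nat.le_succ _))) hzs]

theorem exists_ne_of_crossing_ne_zero {zs : List (X → ZMod 2)} {s : List X}
    (hs : crossing zs s ≠ 0) : ∀ z ∈ zs, ∃ x ∈ s, ∃ y ∈ s, z x ≠ z y := by
  induction zs generalizing s with
  | nil => simp
  | cons z zs ih =>
    rcases s with _ | ⟨x, _ | ⟨y, s⟩⟩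
    · exact absurd rfl hs
    · exact absurd rfl hs
    · rw [crossing, mul_ne_zero_iff] at hs
      rintro w (_ | ⟨_, hw⟩)
      · exact ⟨x, by simp, y, by simp, fun h => hs.1 (CharTwo.add_eq_zero.2 h)⟩
      · obtain ⟨a, ha, b, hb, hab⟩ := ih hs.2 w hw
        exact ⟨a, List.mem_cons_of_mem x ha, b, List.mem_cons_of_mem x hb, hab⟩

theorem IsHemisphereFamily.exists_simplex_forall_exists_ne [Neg X] {H : ℕ → OrderedChain X}
    (hH : IsHemisphereFamily H) {T : Set (List X)} {zs : List (X → ZMod 2)}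
    (hT : ∀ k ≤ zs.length, H k ∈ supportedIn T)
    (hodd : ∀ s ∈ T, ∀ z ∈ zs, ∀ x ∈ s, z (-x) = z x + 1) :
    ∃ s ∈ T, s ≠ [] ∧ ∀ z ∈ zs, ∃ x ∈ s, ∃ y ∈ s, z x ≠ z y := by
  by_contra! hno
  refine one_ne_zero ((hH.eval_crossing_eq_one hT hodd).symm.trans ?_)
  refine linearMap_eq_of_mem_supportedIn (L' := 0) (fun s hs => ?_) (hT _ le_rfl)
  rw [eval_simplex, LinearMap.zero_apply]
  by_contra hne
  have hs' : s ≠ [] := by rintro rfl; cases zs <;> exact hne rfl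
  obtain ⟨z, hz, hconst⟩ := hno s hs hs'
  obtain ⟨x, hx, y, hy, hxy⟩ := exists_ne_of_crossing_ne_zero hne z hz
  exact hxy (hconst x hx y hy)

end Hemispheres

section CoarseHemispheres

variable {X : Type*}

/-- The hemispheres of a cross-polytope with vertices `e i` and `-e i`: each hemisphere is the
join of a new vertex with the whole sphere one dimension below. -/
def hemisphere [Neg X] (e : ℕ → X) : ℕ → OrderedChain X
  | 0 => simplex [e 0]
  | k + 1 => cone (e (k + 1)) (hemisphere e k + map Neg.neg (hemisphere e k))

theorem map_neg_map_neg [InvolutiveNeg X] (c : OrderedChain X) :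
    map Neg.neg (map Neg.neg c) = c := by
  suffices map Neg.neg ∘ₗ map Neg.neg = (LinearMap.id : OrderedChain X →ₗ[ZMod 2] _) from
    LinearMap.congr_fun this c
  exact linearMap_ext fun s => by simp

theorem isHemisphereFamily_hemisphere [InvolutiveNeg X] (e : ℕ → X) :
    IsHemisphereFamily (hemisphere e) := by
  have hcycle : ∀ k, boundary (hemisphere e k + map Neg.neg (hemisphere e k)) = 0 := by
    intro k
    induction k with
    | zero => simp [hemisphere, boundary_simplex, faces, ZModModule.add_self]
    | succ k ih =>
      rw [map_add, boundary_map, hemisphere, boundary_cone, ih, map_zero, add_zero, map_add,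
        map_neg_map_neg, add_comm (map _ _), ZModModule.add_self]
  refine ⟨by simp [hemisphere, boundary_simplex, faces], fun k => ?_⟩
  rw [hemisphere, boundary_cone, hcycle, map_zero, add_zero]

theorem hemisphere_mem_supportedIn {E : Type*} [AddCommGroup E] [Module ℝ E] (e : ℕ → E) (k : ℕ) :
    hemisphere e k ∈ supportedIn {s | s.length = k + 1 ∧
      ∃ ε : ℕ → ℝ, (∀ i, |ε i| = 1) ∧ ∀ x ∈ s, ∃ i ≤ k, x = ε i • e i} := by
  induction k with
  | zero => exact simplex_mem_supportedIn ⟨rfl, 1, by simp, by simp⟩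
  | succ k ih =>
    refine linearMap_mem_of_mem_supportedIn (fun s hs => ?_)
      (add_mem ih (linearMap_mem_of_mem_supportedIn (fun s hs => ?_) ih))
    · obtain ⟨hlen, ε, hε, hvert⟩ := hs
      rw [cone_simplex]
      refine simplex_mem_supportedIn
        ⟨by simp [hlen], Function.update ε (k + 1) 1, fun i => ?_, ?_⟩
      · rcases eq_or_ne i (k + 1) with rfl | hi <;> simp [*]
      · rintro x (_ | ⟨_, hx⟩)
        · exact ⟨k + 1, le_rfl, by simp⟩
        · obtain ⟨i, hi, rfl⟩ := hvert x hx
          exact ⟨i, by omega, by rw [Function.update_of_ne (by omega)]⟩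
    · obtain ⟨hlen, ε, hε, hvert⟩ := hs
      rw [map_simplex]
      refine simplex_mem_supportedIn ⟨by simp [hlen], -ε, by simpa using hε, ?_⟩
      simp only [List.forall_mem_map]
      intro x hx
      obtain ⟨i, hi, rfl⟩ := hvert x hx
      exact ⟨i, hi, by simp⟩

end CoarseHemispheres

section Barycentric

variable {E : Type*} [SeminormedAddCommGroup E] [NormedSpace ℝ E]

/-- The barycenter of the vertices of a simplex. -/
def barycenter (s : List E) : E := (s.length : ℝ)⁻¹ • s.sum

theorem barycenter_map_neg (s : List E) : barycenter (s.map Neg.neg) = -barycenter s := by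
  simp [barycenter, ← List.sum_neg]

theorem barycenter_mem_convexHull {s : List E} (hs : s ≠ []) :
    barycenter s ∈ convexHull ℝ {x | x ∈ s} := by
  have hlen : (s.length : ℝ) ≠ 0 := by simpa using hs
  rw [barycenter, ← Fin.sum_univ_getElem, Finset.smul_sum]
  refine (convex_convexHull ℝ _).sum_mem (by simp) (by simp [hlen]) fun i _ =>
    subset_convexHull ℝ _ (by simp)

theorem dist_getElem_barycenter_le {s : List E} {d : ℝ} (hd : ∀ x ∈ s, ∀ y ∈ s, dist x y ≤ d)
    (i : Fin s.length) : dist s[i] (barycenter s) ≤ (1 - (s.length : ℝ)⁻¹) * d := by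
  have hlen : (s.length : ℝ) ≠ 0 := by have := i.pos; positivity
  have hsum : s[i] - barycenter s = (s.length : ℝ)⁻¹ • ∑ j ∈ univ.erase i, (s[i] - s[j]) := by
    rw [sum_erase _ (sub_self _), sum_sub_distrib, smul_sub, sum_const, card_fin,
      ← Nat.cast_smul_eq_nsmul ℝ, inv_smul_smul₀ hlen, barycenter, ← Fin.sum_univ_getElem]
    rfl
  have hcard : ((univ.erase i).card : ℝ) = s.length - 1 := by
    rw [card_erase_of_mem (mem_univ i), card_fin, Nat.cast_pred i.pos]
  calc dist s[i] (barycenter s)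
      = (s.length : ℝ)⁻¹ * ‖∑ j ∈ univ.erase i, (s[i] - s[j])‖ := by
        rw [dist_eq_norm, hsum, norm_smul, Real.norm_of_nonneg (by positivity)]
    _ ≤ (s.length : ℝ)⁻¹ * ((univ.erase i).card • d) := by
        gcongr
        refine (norm_sum_le_of_le _ fun j _ => ?_).trans_eq (sum_const d)
        rw [← dist_eq_norm]
        exact hd _ (by simp) _ (by simp)
    _ = (1 - (s.length : ℝ)⁻¹) * d := by
        rw [nsmul_eq_mul, hcard]
        field_simp

theorem dist_barycenter_le {s : List E} {d : ℝ} (hd : ∀ x ∈ s, ∀ y ∈ s, dist x y ≤ d) {x : E}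
    (hx : x ∈ convexHull ℝ {x | x ∈ s}) :
    dist x (barycenter s) ≤ (1 - (s.length : ℝ)⁻¹) * d := by
  refine convexHull_min (fun y hy => ?_) (convex_closedBall (barycenter s) _) hx
  obtain ⟨i, rfl⟩ := List.get_of_mem hy
  exact dist_getElem_barycenter_le hd i

/-- The simplices with at most `l` vertices whose convex hull is contained in `S` and whose
diameter is at most `d`. -/
def smallSimplices (S : Set E) (l : ℕ) (d : ℝ) : Set (List E) :=
  {s | s.length ≤ l ∧ convexHull ℝ {x | x ∈ s} ⊆ S ∧ ∀ x ∈ s, ∀ y ∈ s, dist x y ≤ d}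

theorem smallSimplices_subset {S S' : Set E} {l l' : ℕ} {d d' : ℝ} (hS : S ⊆ S') (hl : l ≤ l')
    (hd : d ≤ d') : smallSimplices S l d ⊆ smallSimplices S' l' d' := fun _ hs =>
  ⟨hs.1.trans hl, hs.2.1.trans hS, fun x hx y hy => (hs.2.2 x hx y hy).trans hd⟩

theorem cons_barycenter_mem_smallSimplices {s t u : List E} {l : ℕ} {d : ℝ} (hl : s.length ≤ l)
    (hd : ∀ x ∈ s, ∀ y ∈ s, dist x y ≤ d) (ht : t ∈ faces s)
    (hu : u ∈ smallSimplices (convexHull ℝ {x | x ∈ t}) t.length ((1 - (l : ℝ)⁻¹) * d)) :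
    barycenter s :: u ∈
      smallSimplices (convexHull ℝ {x | x ∈ s}) s.length ((1 - (l : ℝ)⁻¹) * d) := by
  obtain ⟨hulen, huhull, hudist⟩ := hu
  have hlen := length_add_one_of_mem_faces ht
  have hs : s ≠ [] := by rintro rfl; simp at hlen
  have hd0 : 0 ≤ d := by
    obtain ⟨x, hx⟩ := List.exists_mem_of_ne_nil s hs
    exact dist_nonneg.trans (hd x hx x hx)
  have hshull : ∀ x ∈ u, x ∈ convexHull ℝ {x | x ∈ s} := fun x hx =>
    convexHull_mono (subset_of_mem_faces ht) (huhull (subset_convexHull ℝ _ hx))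
  have hspos : 0 < (s.length : ℝ) := by exact_mod_cast List.length_pos_iff.2 hs
  have hratio : (1 - (s.length : ℝ)⁻¹) * d ≤ (1 - (l : ℝ)⁻¹) * d := by gcongr
  have hbary : ∀ x ∈ convexHull ℝ {x | x ∈ s}, dist x (barycenter s) ≤ (1 - (l : ℝ)⁻¹) * d :=
    fun x hx => (dist_barycenter_le hd hx).trans hratio
  refine ⟨by simp; omega, convexHull_min ?_ (convex_convexHull ℝ _), ?_⟩
  · rintro x (_ | ⟨_, hx⟩)
    exacts [barycenter_mem_convexHull hs, hshull x hx]
  · rintro x (_ | ⟨_, hx⟩) y (_ | ⟨_, hy⟩)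
    · exact hbary _ (barycenter_mem_convexHull hs)
    · rw [dist_comm]
      exact hbary y (hshull y hy)
    · exact hbary x (hshull x hx)
    · exact hudist x hx y hy

theorem subdivide_simplex_mem_supportedIn {s : List E} {l : ℕ} {d : ℝ} (hl : s.length ≤ l)
    (hd : ∀ x ∈ s, ∀ y ∈ s, dist x y ≤ d) :
    subdivide barycenter (simplex s) ∈
      supportedIn (smallSimplices (convexHull ℝ {x | x ∈ s}) s.length ((1 - (l : ℝ)⁻¹) * d)) := by
  induction s using simplex_induction with
  | nil =>
    rw [subdivide_simplex_nil]
    exact simplex_mem_supportedIn ⟨le_rfl, subset_rfl, by simp⟩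
  | of_faces s hs ih =>
    rw [subdivide_simplex_of_ne_nil _ hs]
    refine linearMap_mem_of_mem_supportedIn (L := cone (barycenter s) ∘ₗ subdivide barycenter)
      (fun t ht => ?_) (boundary_simplex_mem_supportedIn s)
    have hlen := length_add_one_of_mem_faces ht
    rw [LinearMap.comp_apply]
    refine linearMap_mem_of_mem_supportedIn (fun u hu => ?_)
      (ih t ht (by omega) fun x hx y hy =>
        hd x (subset_of_mem_faces ht hx) y (subset_of_mem_faces ht hy))
    rw [cone_simplex]
    exact simplex_mem_supportedIn (cons_barycenter_mem_smallSimplices hl hd ht hu)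

theorem subdivide_mem_supportedIn_smallSimplices {S : Set E} {l : ℕ} {d : ℝ} {c : OrderedChain E}
    (hc : c ∈ supportedIn (smallSimplices S l d)) :
    subdivide barycenter c ∈ supportedIn (smallSimplices S l ((1 - (l : ℝ)⁻¹) * d)) :=
  linearMap_mem_of_mem_supportedIn (fun _ hs =>
    Finsupp.supported_mono (smallSimplices_subset hs.2.1 hs.1 le_rfl)
      (subdivide_simplex_mem_supportedIn hs.1 hs.2.2)) hc

theorem IsHemisphereFamily.subdivide_barycenter {H : ℕ → OrderedChain E}
    (hH : IsHemisphereFamily H) : IsHemisphereFamily fun k => subdivide barycenter (H k) where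
  boundary_zero := by rw [boundary_subdivide, hH.boundary_zero, subdivide_simplex_nil]
  boundary_succ k := by
    rw [boundary_subdivide, hH.boundary_succ, map_add, subdivide_map barycenter_map_neg]

theorem IsHemisphereFamily.exists_smallSimplices_pow_mul {H : ℕ → OrderedChain E}
    (hH : IsHemisphereFamily H) {S : Set E} {l : ℕ} {d : ℝ}
    (hsupp : ∀ k < l, H k ∈ supportedIn (smallSimplices S l d)) (N : ℕ) :
    ∃ H' : ℕ → OrderedChain E, IsHemisphereFamily H' ∧
      ∀ k < l, H' k ∈ supportedIn (smallSimplices S l ((1 - (l : ℝ)⁻¹) ^ N * d)) := by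
  induction N with
  | zero => exact ⟨H, hH, by simpa using hsupp⟩
  | succ N ih =>
    obtain ⟨H', hH', hsupp'⟩ := ih
    refine ⟨_, hH'.subdivide_barycenter, fun k hk => ?_⟩
    rw [pow_succ', mul_assoc]
    exact subdivide_mem_supportedIn_smallSimplices (hsupp' k hk)

theorem IsHemisphereFamily.exists_smallSimplices {H : ℕ → OrderedChain E}
    (hH : IsHemisphereFamily H) {S : Set E} {l : ℕ} (hl : 0 < l) {d : ℝ}
    (hsupp : ∀ k < l, H k ∈ supportedIn (smallSimplices S l d)) {δ : ℝ} (hδ : 0 < δ) :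
    ∃ H' : ℕ → OrderedChain E, IsHemisphereFamily H' ∧
      ∀ k < l, H' k ∈ supportedIn (smallSimplices S l δ) := by
  have hl1 : (1 : ℝ) ≤ l := by exact_mod_cast hl
  have hlim : Filter.Tendsto (fun N : ℕ => (1 - (l : ℝ)⁻¹) ^ N * d) Filter.atTop (nhds 0) := by
    simpa using (tendsto_pow_atTop_nhds_zero_of_lt_one
      (sub_nonneg.2 (inv_le_one_of_one_le₀ hl1)) (sub_lt_self 1 (by positivity))).mul_const d
  obtain ⟨N, hN⟩ := (hlim.eventually_lt_const hδ).exists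
  obtain ⟨H', hH', hsupp'⟩ := hH.exists_smallSimplices_pow_mul hsupp N
  exact ⟨H', hH', fun k hk =>
    Finsupp.supported_mono (smallSimplices_subset subset_rfl le_rfl hN.le) (hsupp' k hk)⟩

end Barycentric

section CrossPolytope

/-- The vertices of the cross-polytope, that is, the unit ball of the `ℓ¹` norm; the index runs
through `ℕ`, and `crossVertex p k = 0` when `p ≤ k`. -/
def crossVertex (p k : ℕ) : PiLp 1 fun _ : Fin p => ℝ :=
  WithLp.toLp 1 fun i => if i.1 = k then 1 else 0

theorem crossVertex_apply (p k : ℕ) (i : Fin p) :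
    crossVertex p k i = if i.1 = k then 1 else 0 := rfl

theorem sum_mul_crossVertex {p k : ℕ} (hk : k < p) (ε : ℕ → ℝ) :
    ∑ i : Fin p, ε i * crossVertex p k i = ε k := by
  rw [sum_eq_single ⟨k, hk⟩ (fun i _ hi => ?_) (by simp)]
  · simp [crossVertex_apply]
  · rw [crossVertex_apply, if_neg fun h => hi (Fin.ext h), mul_zero]

theorem norm_crossVertex {p k : ℕ} (hk : k < p) : ‖crossVertex p k‖ = 1 := by
  rw [PiLp.norm_eq_of_L1]
  refine (sum_congr rfl fun i _ => ?_).trans (sum_mul_crossVertex hk 1)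
  rw [crossVertex_apply]
  split_ifs <;> simp

theorem convexHull_signed_crossVertex_subset_sphere {p : ℕ} {ε : ℕ → ℝ} (hε : ∀ i, |ε i| = 1)
    {A : Set (PiLp 1 fun _ : Fin p => ℝ)} (hA : ∀ x ∈ A, ∃ i < p, x = ε i • crossVertex p i) :
    convexHull ℝ A ⊆ Metric.sphere 0 1 := by
  let l : (PiLp 1 fun _ : Fin p => ℝ) →ₗ[ℝ] ℝ := ∑ i : Fin p, ε i • PiLp.projₗ 1 _ i
  have hl : ∀ x, l x = ∑ i : Fin p, ε i * x i := fun x => by simp [l]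
  have hface : convexHull ℝ A ⊆ Metric.closedBall 0 1 ∩ {x | 1 ≤ l x} := by
    refine convexHull_min (fun x hx => ?_)
      ((convex_closedBall 0 1).inter (convex_halfSpace_ge l.isLinear 1))
    obtain ⟨i, hi, rfl⟩ := hA x hx
    constructor
    · simp [norm_smul, hε, norm_crossVertex hi]
    · rw [Set.mem_ofPred_eq, map_smul, hl, sum_mul_crossVertex hi, smul_eq_mul,
        ← abs_mul_abs_self, hε, mul_one]
  intro x hx
  obtain ⟨hball, hlx⟩ := hface hx
  rw [mem_closedBall_zero_iff] at hball
  rw [mem_sphere_zero_iff_norm]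
  refine hball.antisymm (hlx.trans ?_)
  rw [hl, PiLp.norm_eq_of_L1]
  refine sum_le_sum fun i _ => (le_abs_self _).trans_eq ?_
  rw [abs_mul, hε, one_mul, Real.norm_eq_abs]

theorem hemisphere_crossVertex_mem_supportedIn {p k : ℕ} (hk : k < p) :
    hemisphere (crossVertex p) k ∈ supportedIn (smallSimplices (Metric.sphere 0 1) p 2) := by
  refine Finsupp.supported_mono ?_ (hemisphere_mem_supportedIn (crossVertex p) k)
  rintro s ⟨hlen, ε, hε, hvert⟩
  have hsphere : convexHull ℝ {x | x ∈ s} ⊆ Metric.sphere 0 1 :=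
    convexHull_signed_crossVertex_subset_sphere hε fun x hx => by
      obtain ⟨i, hi, rfl⟩ := hvert x hx
      exact ⟨i, by omega, rfl⟩
  have hnorm : ∀ x ∈ s, ‖x‖ = 1 := fun x hx =>
    mem_sphere_zero_iff_norm.1 (hsphere (subset_convexHull ℝ _ hx))
  refine ⟨by omega, hsphere, fun x hx y hy => ?_⟩
  calc dist x y ≤ ‖x‖ + ‖y‖ := dist_le_norm_add_norm x y
    _ = 2 := by rw [hnorm x hx, hnorm y hy]; norm_num

end CrossPolytope

end OrderedChain

section BorsukUlam

/-- The sign of a nonzero element as a bit. -/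
def signBit {α : Type*} [AddCommGroup α] [LinearOrder α] (a : α) : ZMod 2 := if 0 < a then 1 else 0

theorem signBit_neg {α : Type*} [AddCommGroup α] [LinearOrder α] [IsOrderedAddMonoid α] {a : α}
    (ha : a ≠ 0) : signBit (-a) = signBit a + 1 := by
  rcases ha.lt_or_gt with h | h
  · simp [signBit, h, h.not_gt]
  · simp [signBit, h, h.le, CharTwo.add_self_eq_zero]

/-- The sign of the number `a`, where `a = 0` is decided by the lexicographic sign of the
vector `x`. -/
def lexSignBit {p : ℕ} (a : ℝ) (x : Fin p → ℝ) : ZMod 2 := signBit (toLex (a, toLex x))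

theorem lexSignBit_neg {p : ℕ} (a : ℝ) {x : Fin p → ℝ} (hx : x ≠ 0) :
    lexSignBit (-a) (-x) = lexSignBit a x + 1 :=
  signBit_neg (a := toLex (a, toLex x)) fun h =>
    hx (congrArg (fun q : ℝ ×ₗ Lex (Fin p → ℝ) => ofLex (ofLex q).2) h)

theorem mul_nonpos_of_lexSignBit_ne {p : ℕ} {a b : ℝ} {x y : Fin p → ℝ}
    (h : lexSignBit a x ≠ lexSignBit b y) : a * b ≤ 0 := by
  have hpos : ∀ {a : ℝ} (x : Fin p → ℝ), 0 < a → lexSignBit a x = 1 := fun x ha =>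
    if_pos (Prod.Lex.toLex_lt_toLex.2 (Or.inl ha))
  have hneg : ∀ {a : ℝ} (x : Fin p → ℝ), a < 0 → lexSignBit a x = 0 := fun x ha =>
    if_neg (Prod.Lex.toLex_lt_toLex.2 (Or.inl ha)).not_gt
  contrapose! h
  rcases pos_and_pos_or_neg_and_neg_of_mul_pos h with ⟨ha, hb⟩ | ⟨ha, hb⟩
  · rw [hpos x ha, hpos y hb]
  · rw [hneg x ha, hneg y hb]

open OrderedChain in
theorem exists_norm_le_of_continuousOn_odd {p m : ℕ} (hmp : m < p)
    {f : (PiLp 1 fun _ : Fin p => ℝ) → Fin m → ℝ} (hf : ContinuousOn f (Metric.sphere 0 1))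
    (hodd : ∀ x ∈ Metric.sphere 0 1, f (-x) = -f x) {ε : ℝ} (hε : 0 < ε) :
    ∃ x ∈ Metric.sphere 0 1, ‖f x‖ ≤ ε := by
  obtain ⟨δ, hδ, hfδ⟩ := Metric.uniformContinuousOn_iff_le.1
    ((isCompact_sphere 0 1).uniformContinuousOn_of_continuous hf) ε hε
  obtain ⟨H, hH, hsupp⟩ := (isHemisphereFamily_hemisphere (crossVertex p)).exists_smallSimplices
    (Nat.zero_lt_of_lt hmp) (fun k hk => hemisphere_crossVertex_mem_supportedIn hk) hδ
  let z (j : Fin m) (x : PiLp 1 fun _ : Fin p => ℝ) : ZMod 2 := lexSignBit (f x j) x.ofLp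
  have hz : ∀ j, ∀ x ∈ Metric.sphere 0 1, z j (-x) = z j x + 1 := fun j x hx => by
    have hx0 : x.ofLp ≠ 0 := fun h => by
      have : x = 0 := WithLp.ofLp_injective 1 h
      simp [this] at hx
    simpa [z, hodd x hx] using lexSignBit_neg (f x j) hx0
  obtain ⟨s, ⟨-, hsphere, hdist⟩, hs, hsign⟩ := hH.exists_simplex_forall_exists_ne
    (zs := (List.finRange m).map z)
    (fun k hk => hsupp k (by simp at hk; omega))
    (fun s hs w hw x hx => by
      obtain ⟨j, -, rfl⟩ := List.mem_map.1 hw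
      exact hz j x (hs.2.1 (subset_convexHull ℝ _ hx)))
  replace hsphere : ∀ x ∈ s, x ∈ Metric.sphere 0 1 := fun x hx =>
    hsphere (subset_convexHull ℝ _ hx)
  obtain ⟨x₀, hx₀⟩ := List.exists_mem_of_ne_nil s hs
  refine ⟨x₀, hsphere x₀ hx₀, (pi_norm_le_iff_of_nonneg hε.le).2 fun j => ?_⟩
  obtain ⟨w, hw, hzw⟩ : ∃ w ∈ s, z j x₀ ≠ z j w := by
    obtain ⟨x, hx, y, hy, hxy⟩ := hsign (z j) (List.mem_map_of_mem (List.mem_finRange j))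
    by_contra! hconst
    exact hxy ((hconst x hx).symm.trans (hconst y hy))
  have hopp : f x₀ j * f w j ≤ 0 := mul_nonpos_of_lexSignBit_ne hzw
  calc ‖f x₀ j‖ ≤ |f x₀ j - f w j| := by
        rw [Real.norm_eq_abs]
        exact sq_le_sq.1 (by nlinarith [sq_nonneg (f w j)])
    _ ≤ dist (f x₀) (f w) := dist_le_pi_dist (f x₀) (f w) j
    _ ≤ ε := hfδ x₀ (hsphere x₀ hx₀) w (hsphere w hw) (hdist x₀ hx₀ w hw)

theorem exists_eq_zero_of_continuousOn_odd {p m : ℕ} (hmp : m < p)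
    {f : (PiLp 1 fun _ : Fin p => ℝ) → Fin m → ℝ} (hf : ContinuousOn f (Metric.sphere 0 1))
    (hodd : ∀ x ∈ Metric.sphere 0 1, f (-x) = -f x) : ∃ x ∈ Metric.sphere 0 1, f x = 0 := by
  obtain ⟨x₁, hx₁, -⟩ := exists_norm_le_of_continuousOn_odd hmp hf hodd one_pos
  obtain ⟨x, hx, hmin⟩ := (isCompact_sphere 0 1).exists_isMinOn ⟨x₁, hx₁⟩ hf.norm
  refine ⟨x, hx, norm_le_zero_iff.1 (le_of_forall_pos_le_add fun ε hε => ?_)⟩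
  obtain ⟨y, hy, hyε⟩ := exists_norm_le_of_continuousOn_odd hmp hf hodd hε
  rw [zero_add]
  exact (hmin hy).trans hyε

theorem borsuk_ulam {E F : Type*} [NormedAddCommGroup E] [NormedSpace ℝ E]
    [NormedAddCommGroup F] [NormedSpace ℝ F] [FiniteDimensional ℝ F]
    (hdim : Module.finrank ℝ F < Module.finrank ℝ E) {f : E → F}
    (hf : ContinuousOn f (Metric.sphere 0 1))
    (hodd : ∀ x ∈ Metric.sphere 0 1, f (-x) = -f x) : ∃ x ∈ Metric.sphere 0 1, f x = 0 := by
  have : FiniteDimensional ℝ E := Module.finite_of_finrank_pos (Nat.zero_lt_of_lt hdim)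
  let L : (PiLp 1 fun _ : Fin (Module.finrank ℝ E) => ℝ) ≃L[ℝ] E :=
    .ofFinrankEq ((WithLp.linearEquiv 1 ℝ _).finrank_eq.trans (by simp))
  let M : F ≃L[ℝ] (Fin (Module.finrank ℝ F) → ℝ) := .ofFinrankEq (by simp)
  let r x : E := ‖L x‖⁻¹ • L x
  have hr0 : ∀ x ∈ Metric.sphere 0 1, L x ≠ 0 := fun x hx =>
    L.map_ne_zero_iff.2 (ne_zero_of_mem_unit_sphere ⟨x, hx⟩)
  have hr : Set.MapsTo r (Metric.sphere 0 1) (Metric.sphere 0 1) := fun x hx => by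
    simp [r, norm_smul, hr0 x hx]
  have hrcont : ContinuousOn r (Metric.sphere 0 1) :=
    (L.continuous.norm.continuousOn.inv₀ fun x hx => norm_ne_zero_iff.2 (hr0 x hx)).smul
      L.continuous.continuousOn
  obtain ⟨x, hx, hfx⟩ := exists_eq_zero_of_continuousOn_odd hdim
    (f := fun x => M (f (r x))) (M.continuous.comp_continuousOn (hf.comp hrcont hr))
    (fun x hx => by
      have hrneg : r (-x) = -r x := by simp [r]
      rw [hrneg, hodd _ (hr hx), map_neg])
  exact ⟨r x, hr hx, M.map_eq_zero_iff.1 hfx⟩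

end BorsukUlam

section MinMax

/-- The sets over which the infimum in `minimaxVal` is taken. -/
structure IsAdmissible (k : ℕ) (A : Set (Fin n → ℝ)) : Prop where
  isCompact : IsCompact A
  neg_mem : ∀ x ∈ A, -x ∈ A
  zero_notMem : 0 ∉ A
  genusGe : GenusGe A k

theorem minimaxVal_eq_sInf_image (Φ : (Fin n → ℝ) → ℝ) (k : ℕ) :
    minimaxVal Φ k = sInf ((fun A => sSup (Φ '' A)) '' {A | IsAdmissible k A}) := by
  refine congrArg sInf (Set.ext fun r => ?_)
  exact ⟨fun ⟨A, hc, hs, h0, hg, hr⟩ => ⟨A, ⟨hc, hs, h0, hg⟩, hr.symm⟩,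
    fun ⟨A, hA, hr⟩ => ⟨A, hA.isCompact, hA.neg_mem, hA.zero_notMem, hA.genusGe, hr.symm⟩⟩

theorem genusGe_inter_sphere (W : Submodule ℝ (Fin n → ℝ)) :
    GenusGe ((W : Set (Fin n → ℝ)) ∩ Metric.sphere 0 1) (Module.finrank ℝ W) := by
  rintro m ⟨f, hcont, hodd, hne⟩
  by_contra! hm
  have hmem : ∀ x ∈ Metric.sphere (0 : W) 1, (x : Fin n → ℝ) ∈ (W : Set _) ∩ Metric.sphere 0 1 :=
    fun x hx => ⟨x.2, by simpa using hx⟩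
  obtain ⟨x, hx, hfx⟩ := borsuk_ulam (f := fun x : W => f x) (by simpa using hm)
    (hcont.comp continuous_subtype_val.continuousOn hmem) fun x hx => hodd x (hmem x hx)
  exact hne x (hmem x hx) hfx

theorem isAdmissible_inter_sphere {W : Submodule ℝ (Fin n → ℝ)} {k : ℕ}
    (hk : k ≤ Module.finrank ℝ W) : IsAdmissible k ((W : Set (Fin n → ℝ)) ∩ Metric.sphere 0 1) where
  isCompact := (isCompact_sphere 0 1).inter_left W.closed_of_finiteDimensional
  neg_mem x hx := ⟨W.neg_mem hx.1, by simpa using hx.2⟩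
  zero_notMem h := by simpa using h.2
  genusGe m hm := hk.trans (genusGe_inter_sphere W m hm)

theorem GenusGe.exists_mem_submodule {A : Set (Fin n → ℝ)} {k : ℕ} (hA : GenusGe A k)
    {W : Submodule ℝ (Fin n → ℝ)} (hW : n < k + Module.finrank ℝ W) : ∃ x ∈ A, x ∈ W := by
  by_contra! hdisj
  let M : ((Fin n → ℝ) ⧸ W) ≃ₗ[ℝ] (Fin (Module.finrank ℝ ((Fin n → ℝ) ⧸ W)) → ℝ) :=
    .ofFinrankEq _ _ (by simp)
  have hk := hA _ ⟨M.toLinearMap ∘ₗ W.mkQ,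
    (LinearMap.continuous_of_finiteDimensional _).continuousOn, fun x _ => map_neg _ x,
    fun x hx hMx => hdisj x hx (by simpa using hMx)⟩
  have hdim := W.finrank_quotient_add_finrank
  rw [Module.finrank_fin_fun] at hdim
  omega

theorem exists_isAdmissible {k : ℕ} (hk : k ≤ n) : ∃ A : Set (Fin n → ℝ), IsAdmissible k A :=
  ⟨_, isAdmissible_inter_sphere (W := ⊤) (by simpa using hk)⟩

variable {Φ : (Fin n → ℝ) → ℝ} {k : ℕ} {c : ℝ}

theorem minimaxVal_le_sSup_image (hΦ : ∀ x, 0 ≤ Φ x) {A : Set (Fin n → ℝ)}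
    (hA : IsAdmissible k A) : minimaxVal Φ k ≤ sSup (Φ '' A) := by
  rw [minimaxVal_eq_sInf_image]
  refine csInf_le ⟨0, ?_⟩ ⟨A, hA, rfl⟩
  rintro _ ⟨B, -, rfl⟩
  exact Real.sSup_nonneg (by rintro _ ⟨x, -, rfl⟩; exact hΦ x)

theorem minimaxVal_le (hΦ : ∀ x, 0 ≤ Φ x) (hc : ∀ x, Φ x ≤ c) (hk : k ≤ n) :
    minimaxVal Φ k ≤ c := by
  obtain ⟨A, hA⟩ := exists_isAdmissible hk
  refine (minimaxVal_le_sSup_image hΦ hA).trans (Real.sSup_le ?_ ((hΦ 0).trans (hc 0)))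
  rintro _ ⟨x, -, rfl⟩
  exact hc x

theorem minimaxVal_lt_of_submodule (hΦ : ∀ x, 0 ≤ Φ x) (hcont : ContinuousOn Φ {0}ᶜ) (hk : 0 < k)
    {W : Submodule ℝ (Fin n → ℝ)} (hW : k ≤ Module.finrank ℝ W)
    (hc : ∀ x ∈ W, x ≠ 0 → Φ x < c) : minimaxVal Φ k < c := by
  have hadm := isAdmissible_inter_sphere hW
  have : Nontrivial W := Module.finrank_pos_iff.1 (hk.trans_le hW)
  obtain ⟨w, hw⟩ := NormedSpace.sphere_nonempty (x := (0 : W)).2 zero_le_one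
  obtain ⟨x, hx, hmax⟩ := hadm.isCompact.exists_sSup_image_eq ⟨w, w.2, by simpa using hw⟩
    (hcont.mono fun x hx h0 => hadm.zero_notMem (h0 ▸ hx))
  refine (minimaxVal_le_sSup_image hΦ hadm).trans_lt ?_
  rw [hmax]
  exact hc x hx.1 fun h0 => hadm.zero_notMem (h0 ▸ hx)

theorem le_minimaxVal_of_submodule (hcont : ContinuousOn Φ {0}ᶜ) (hk : k ≤ n)
    {W : Submodule ℝ (Fin n → ℝ)} (hW : n < k + Module.finrank ℝ W)
    (hc : ∀ x ∈ W, x ≠ 0 → c ≤ Φ x) : c ≤ minimaxVal Φ k := by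
  rw [minimaxVal_eq_sInf_image]
  refine le_csInf (Set.Nonempty.image _ (exists_isAdmissible hk)) ?_
  rintro _ ⟨A, hA, rfl⟩
  have hA0 : ∀ x ∈ A, x ≠ 0 := fun x hx h0 => hA.zero_notMem (h0 ▸ hx)
  obtain ⟨x, hxA, hxW⟩ := hA.genusGe.exists_mem_submodule hW
  exact (hc x hxW (hA0 x hxA)).trans
    (le_csSup (hA.isCompact.bddAbove_image (hcont.mono hA0)) ⟨x, hxA, rfl⟩)

end MinMax

section Rayleigh

variable (G : SimpleGraph (Fin n)) [DecidableRel G.Adj]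

theorem sum_degR_mul_abs (x : Fin n → ℝ) :
    ∑ i, degR G i * |x i| = (∑ i, ∑ j, if G.Adj i j then |x i| + |x j| else 0) / 2 := by
  have hleft : ∑ i, ∑ j, (if G.Adj i j then |x i| else 0) = ∑ i, degR G i * |x i| :=
    sum_congr rfl fun i _ => by
      rw [← sum_filter, ← G.neighborFinset_eq_filter, sum_const, G.card_neighborFinset_eq_degree,
        nsmul_eq_mul, degR]
  have hright : ∑ i, ∑ j, (if G.Adj i j then |x j| else 0) = ∑ i, degR G i * |x i| := by
    rw [sum_comm, ← hleft]
    simp only [G.adj_comm]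
  rw [eq_div_iff two_ne_zero, mul_two]
  nth_rw 1 [← hleft]
  rw [← hright, ← sum_add_distrib]
  refine sum_congr rfl fun i _ => ?_
  rw [← sum_add_distrib]
  exact sum_congr rfl fun j _ => by split_ifs <;> simp

theorem ite_abs_add_le (x : Fin n → ℝ) (i j : Fin n) :
    (if G.Adj i j then |x i + x j| else 0) ≤ if G.Adj i j then |x i| + |x j| else 0 := by
  split_ifs
  exacts [abs_add_le _ _, le_rfl]

theorem IplusU_nonneg (x : Fin n → ℝ) : 0 ≤ IplusU G x :=
  div_nonneg (sum_nonneg fun _ _ => sum_nonneg fun _ _ => by split_ifs <;> positivity) zero_le_two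

theorem IplusU_le_sum_degR_mul_abs (x : Fin n → ℝ) : IplusU G x ≤ ∑ i, degR G i * |x i| := by
  rw [sum_degR_mul_abs, IplusU]
  gcongr
  exact ite_abs_add_le G x _ _

theorem IplusU_eq_sum_degR_mul_abs_iff (x : Fin n → ℝ) :
    IplusU G x = ∑ i, degR G i * |x i| ↔ ∀ i j, G.Adj i j → 0 ≤ x i * x j := by
  rw [sum_degR_mul_abs, IplusU, div_left_inj' two_ne_zero, sum_eq_sum_iff_of_le
    fun i _ => sum_le_sum fun j _ => ite_abs_add_le G x i j]
  refine forall_congr' fun i => ?_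
  rw [imp_iff_right (mem_univ i), sum_eq_sum_iff_of_le fun j _ => ite_abs_add_le G x i j]
  refine forall_congr' fun j => ?_
  rw [imp_iff_right (mem_univ j)]
  split_ifs with hij
  · simp [hij, abs_add_eq_add_abs_iff, mul_nonneg_iff]
  · simp [hij]

theorem continuous_IplusU : Continuous (IplusU G) := by
  refine (continuous_finsetSum _ fun i _ => continuous_finsetSum _ fun j _ => ?_).div_const 2
  split_ifs <;> fun_prop

theorem RayleighPlus_nonneg (x : Fin n → ℝ) : 0 ≤ RayleighPlus G x :=
  div_nonneg (IplusU_nonneg G x)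
    (sum_nonneg fun _ _ => mul_nonneg (Nat.cast_nonneg _) (abs_nonneg _))

theorem RayleighPlus_le_one (x : Fin n → ℝ) : RayleighPlus G x ≤ 1 :=
  div_le_one_of_le₀ (IplusU_le_sum_degR_mul_abs G x)
    ((IplusU_nonneg G x).trans (IplusU_le_sum_degR_mul_abs G x))

variable {G}

theorem sum_degR_mul_abs_pos (hiso : ∀ i, 0 < G.degree i) {x : Fin n → ℝ} (hx : x ≠ 0) :
    0 < ∑ i, degR G i * |x i| := by
  obtain ⟨i, hi⟩ := Function.ne_iff.1 hx
  exact sum_pos' (fun j _ => mul_nonneg (Nat.cast_nonneg _) (abs_nonneg _))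
    ⟨i, mem_univ i, mul_pos (Nat.cast_pos.2 (hiso i)) (abs_pos.2 hi)⟩

theorem continuousOn_RayleighPlus (hiso : ∀ i, 0 < G.degree i) :
    ContinuousOn (RayleighPlus G) {0}ᶜ := by
  have hden : Continuous fun x : Fin n → ℝ => ∑ i, degR G i * |x i| := by fun_prop
  exact (continuous_IplusU G).continuousOn.div hden.continuousOn
    fun x hx => (sum_degR_mul_abs_pos hiso hx).ne'

theorem RayleighPlus_eq_one_iff (hiso : ∀ i, 0 < G.degree i) {x : Fin n → ℝ} (hx : x ≠ 0) :
    RayleighPlus G x = 1 ↔ ∀ i j, G.Adj i j → 0 ≤ x i * x j := by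
  rw [RayleighPlus, div_eq_one_iff_eq (sum_degR_mul_abs_pos hiso hx).ne',
    IplusU_eq_sum_degR_mul_abs_iff]

theorem ckSignless_le_one {k : ℕ} (hk : k ≤ n) : ckSignless G k ≤ 1 :=
  minimaxVal_le (RayleighPlus_nonneg G) (RayleighPlus_le_one G) hk

theorem ckSignless_eq_one_of_submodule (hiso : ∀ i, 0 < G.degree i) {k : ℕ} (hk : k ≤ n)
    {W : Submodule ℝ (Fin n → ℝ)} (hW : n < k + Module.finrank ℝ W)
    (hx : ∀ x ∈ W, ∀ i j, G.Adj i j → 0 ≤ x i * x j) : ckSignless G k = 1 :=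
  (ckSignless_le_one hk).antisymm <|
    le_minimaxVal_of_submodule (continuousOn_RayleighPlus hiso) hk hW fun x hxW hx0 =>
      ((RayleighPlus_eq_one_iff hiso hx0).2 (hx x hxW)).ge

theorem ckSignless_lt_one_of_submodule (hiso : ∀ i, 0 < G.degree i) {k : ℕ} (hk : 0 < k)
    {W : Submodule ℝ (Fin n → ℝ)} (hW : k ≤ Module.finrank ℝ W)
    (hx : ∀ x ∈ W, x ≠ 0 → ∃ i j, G.Adj i j ∧ x i * x j < 0) : ckSignless G k < 1 := by
  refine minimaxVal_lt_of_submodule (RayleighPlus_nonneg G) (continuousOn_RayleighPlus hiso) hk hW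
    fun x hxW hx0 => (RayleighPlus_le_one G x).lt_of_ne fun h1 => ?_
  obtain ⟨i, j, hij, hneg⟩ := hx x hxW hx0
  exact hneg.not_ge ((RayleighPlus_eq_one_iff hiso hx0).1 h1 i j hij)

end Rayleigh

section Matchings

variable {V : Type*}

/-- `G` has a matching with `m` edges; the `t`-th edge joins `u t` to `v t`. -/
def HasMatching (G : SimpleGraph V) (m : ℕ) : Prop :=
  ∃ u v : Fin m → V, Function.Injective (Sum.elim u v) ∧ ∀ t, G.Adj (u t) (v t)

theorem HasMatching.of_fintype {G : SimpleGraph V} {ι : Type*} [Fintype ι] {u v : ι → V}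
    (hinj : Function.Injective (Sum.elim u v)) (hadj : ∀ t, G.Adj (u t) (v t)) :
    HasMatching G (Fintype.card ι) := by
  let e := (Fintype.equivFin ι).symm
  refine ⟨u ∘ e, v ∘ e, ?_, fun t => hadj (e t)⟩
  rw [← Sum.elim_comp_map]
  exact hinj.comp (e.injective.sumMap e.injective)

theorem HasMatching.two_mul_le [Fintype V] {G : SimpleGraph V} {m : ℕ} (hm : HasMatching G m) :
    2 * m ≤ Fintype.card V := by
  obtain ⟨u, v, hinj, -⟩ := hm
  simpa [two_mul] using Fintype.card_le_of_injective _ hinj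

theorem HasMatching.of_edges {G : SimpleGraph V} {M : Finset (Sym2 V)} (hM : ↑M ⊆ G.edgeSet)
    (hdisj : ∀ e ∈ M, ∀ e' ∈ M, ∀ v, v ∈ e → v ∈ e' → e = e') : HasMatching G #M := by
  rw [← Fintype.card_coe]
  have hout : ∀ e : M, s(e.1.out.1, e.1.out.2) = e.1 := fun e => Quot.out_eq e.1
  have hadj : ∀ e : M, G.Adj e.1.out.1 e.1.out.2 := fun e => by
    rw [← SimpleGraph.mem_edgeSet, hout]
    exact hM e.2
  have heq : ∀ e e' : M, ∀ v, v ∈ e.1 → v ∈ e'.1 → e = e' := fun e e' v hv hv' =>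
    Subtype.ext (hdisj _ e.2 _ e'.2 v hv hv')
  refine .of_fintype (u := fun e : M => e.1.out.1) (v := fun e => e.1.out.2)
    (Function.Injective.sumElim (fun e e' h => ?_) (fun e e' h => ?_) fun e e' h => ?_) hadj
  · exact heq e e' _ e.1.out_fst_mem (by simp only [h, Sym2.out_fst_mem])
  · exact heq e e' _ e.1.out_snd_mem (by simp only [h, Sym2.out_snd_mem])
  · obtain rfl := heq e e' _ e.1.out_fst_mem (by simp only [h, Sym2.out_snd_mem])
    exact (hadj e).ne h

theorem exists_hasMatching_card_le_edgeCover_add [Fintype V] {G : SimpleGraph V}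
    {F : Finset (Sym2 V)} (hF : ↑F ⊆ G.edgeSet) (hcover : ∀ v, ∃ e ∈ F, v ∈ e) :
    ∃ m, HasMatching G m ∧ Fintype.card V ≤ #F + m := by
  classical
  choose φ hφF hφ using hcover
  let M := F.filter fun e => ∀ v ∈ e, φ v = e
  have hfibre : ∀ e ∈ F, #{v | φ v = e} ≤ 1 + if ∀ v ∈ e, φ v = e then 1 else 0 := by
    intro e he
    have hsub : ({v | φ v = e} : Finset V) ⊆ e.toFinset := fun v hv => by
      obtain rfl := (mem_filter.1 hv).2
      exact Sym2.mem_toFinset.2 (hφ v)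
    have hcard : #e.toFinset = 2 :=
      Sym2.card_toFinset_of_not_isDiag e (G.not_isDiag_of_mem_edgeSet (hF he))
    split_ifs with hM
    · exact (card_le_card hsub).trans_eq hcard
    · obtain ⟨v, hv, hve⟩ := by simpa only [not_forall] using hM
      have hlt : #{v | φ v = e} < #e.toFinset :=
        card_lt_card ((ssubset_iff_of_subset hsub).2
          ⟨v, Sym2.mem_toFinset.2 hv, by simpa using hve⟩)
      omega
  refine ⟨#M, .of_edges (fun e he => hF (mem_filter.1 he).1) fun e he e' he' v hv hv' => ?_, ?_⟩
  · exact ((mem_filter.1 he).2 v hv).symm.trans ((mem_filter.1 he').2 v hv')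
  · calc Fintype.card V = ∑ e ∈ F, #{v | φ v = e} :=
          card_eq_sum_card_fiberwise fun v _ => hφF v
      _ ≤ ∑ e ∈ F, (1 + if ∀ v ∈ e, φ v = e then 1 else 0) := sum_le_sum hfibre
      _ = #F + #M := by rw [sum_add_distrib, sum_const, smul_eq_mul, mul_one, card_filter]

open scoped Classical in
theorem card_le_card_filter_adj_of_isIndepSet [Finite V] {G : SimpleGraph V} {S B : Finset V}
    (hS : G.IsIndepSet S) (hmax : #S = G.indepNum) (hB : G.IsIndepSet B) (hdisj : Disjoint S B) :
    #B ≤ #{w ∈ S | ∃ v ∈ B, G.Adj v w} := by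
  have hindep : G.IsIndepSet ({w ∈ S | ¬∃ v ∈ B, G.Adj v w} ∪ B : Finset V) := by
    rw [coe_union]
    have hno : ∀ w ∈ ({w ∈ S | ¬∃ v ∈ B, G.Adj v w} : Finset V), ∀ v ∈ B, ¬G.Adj v w :=
      fun w hw v hv h => (mem_filter.1 hw).2 ⟨v, hv, h⟩
    exact Set.pairwise_union.2 ⟨hS.mono fun w hw => (mem_filter.1 hw).1, hB, fun w hw v hv _ =>
      ⟨fun h => hno w hw v hv h.symm, hno w hw v hv⟩⟩
  have hle := hindep.card_le_indepNum
  rw [card_union_of_disjoint (hdisj.mono_left (filter_subset _ _)), ← hmax,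
    ← card_filter_add_card_filter_not (s := S) fun w => ∃ v ∈ B, G.Adj v w] at hle
  omega

theorem exists_injOn_adj_of_isIndepSet [Finite V] {G : SimpleGraph V} {S T : Finset V}
    (hS : G.IsIndepSet S) (hmax : #S = G.indepNum) (hT : G.IsIndepSet T) (hdisj : Disjoint S T) :
    ∃ f : V → V, Set.InjOn f T ∧ ∀ v ∈ T, f v ∈ S ∧ G.Adj v (f v) := by
  classical
  let N (v : T) : Finset V := S.filter (G.Adj v)
  have hall : ∀ A : Finset T, #A ≤ #(A.biUnion N) := by
    intro A
    have hsub : A.map (Function.Embedding.subtype _) ⊆ T := map_subtype_subset A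
    calc #A = #(A.map (Function.Embedding.subtype _)) := (card_map _).symm
      _ ≤ #{w ∈ S | ∃ v ∈ A.map (Function.Embedding.subtype _), G.Adj v w} :=
        card_le_card_filter_adj_of_isIndepSet hS hmax (hT.mono hsub) (hdisj.mono_right hsub)
      _ ≤ #(A.biUnion N) := card_le_card fun w hw => by
        obtain ⟨hwS, v, hv, hvw⟩ := mem_filter.1 hw
        obtain ⟨v, hvA, rfl⟩ := mem_map.1 hv
        exact mem_biUnion.2 ⟨v, hvA, mem_filter.2 ⟨hwS, hvw⟩⟩
  obtain ⟨f, hf, hfN⟩ := (all_card_le_biUnion_card_iff_exists_injective N).1 hall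
  have hfT : ∀ v : T, Function.extend Subtype.val f id v = f v :=
    Subtype.val_injective.extend_apply f id
  refine ⟨Function.extend Subtype.val f id, fun v hv w hw h => ?_, fun v hv => ?_⟩
  · rw [hfT ⟨v, hv⟩, hfT ⟨w, hw⟩] at h
    exact congrArg Subtype.val (hf h)
  · rw [hfT ⟨v, hv⟩]
    exact mem_filter.1 (hfN ⟨v, hv⟩)

theorem exists_hasMatching_card_le_add_indepNum [Fintype V] {G : SimpleGraph V}
    (hG : G.Colorable 2) : ∃ m, HasMatching G m ∧ Fintype.card V ≤ m + G.indepNum := by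
  classical
  obtain ⟨c⟩ := hG
  obtain ⟨S, hS⟩ := G.exists_isNIndepSet_indepNum
  have hclass : ∀ i, G.IsIndepSet ({v ∈ Sᶜ | c v = i} : Finset V) := fun i v hv w hw _ hvw =>
    c.valid hvw ((mem_filter.1 hv).2.trans (mem_filter.1 hw).2.symm)
  choose f hinj hf using fun i => exists_injOn_adj_of_isIndepSet hS.isIndepSet hS.card_eq
    (hclass i) (disjoint_compl_right.mono_right (filter_subset _ _))
  replace hf : ∀ v : ↥Sᶜ, f (c v) v ∈ S ∧ G.Adj v (f (c v) v) := fun v =>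
    hf (c v) v (mem_filter.2 ⟨v.2, rfl⟩)
  refine ⟨_, .of_fintype (u := fun v : ↥Sᶜ => v.1) (v := fun v => f (c v) v)
    (Subtype.val_injective.sumElim ?_ fun v w h => ?_) fun v => (hf v).2, ?_⟩
  · intro v w (h : f (c v) v = f (c w) w)
    have hcol : c v = c w := by
      have hv := c.valid (hf v).2
      have hw := c.valid (hf w).2
      rw [← h] at hw
      omega
    rw [hcol] at h
    exact Subtype.ext (hinj (c w) (mem_filter.2 ⟨v.2, hcol⟩) (mem_filter.2 ⟨w.2, rfl⟩) h)
  · exact mem_compl.1 v.2 (h ▸ (hf w).1)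
  · rw [Fintype.card_coe, ← hS.card_eq, card_compl_add_card]

end Matchings

section Multiplicity

variable {G : SimpleGraph (Fin n)}

theorem indepNum_eq : indepNum G = G.indepNum := by
  refine congrArg sSup (Set.ext fun k => ⟨?_, ?_⟩)
  · rintro ⟨S, hk, hS⟩
    exact ⟨S, fun i hi j hj _ => hS i hi j hj, hk⟩
  · rintro ⟨S, hS, hk⟩
    exact ⟨S, hk, fun i hi j hj hij => hS hi hj hij.ne hij⟩

variable [DecidableRel G.Adj]

theorem exists_edgeCover_card_eq_edgeCoverNum (hiso : ∀ i, 0 < G.degree i) :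
    ∃ F : Finset (Sym2 (Fin n)), ↑F ⊆ G.edgeSet ∧ (∀ v, ∃ e ∈ F, v ∈ e) ∧
      #F = edgeCoverNum G := by
  refine Nat.sInf_mem (s := {k | ∃ F : Finset (Sym2 (Fin n)), ↑F ⊆ G.edgeSet ∧
    (∀ v, ∃ e ∈ F, v ∈ e) ∧ #F = k}) ⟨_, G.edgeFinset, by simp, fun v => ?_, rfl⟩
  obtain ⟨w, hw⟩ := (G.degree_pos_iff_exists_adj v).1 (hiso v)
  exact ⟨s(v, w), by simpa using hw, by simp⟩

variable (G) in
/-- The multiplicity `t` of the eigenvalue `1` among the min-max eigenvalues `λ₁, …, λₙ`. -/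
def multiplicityOne : ℕ := Set.ncard {k : Fin n | ckSignless G (k.1 + 1) = 1}

theorem ncard_setOf_le_val (m : ℕ) : Set.ncard {k : Fin n | m ≤ k.1} = n - m := by
  have h := card_filter_add_card_filter_not (s := univ) fun k : Fin n => k.1 < m
  simp only [Fin.card_filter_val_lt, card_fin, not_lt] at h
  rw [Set.ncard_eq_toFinset_card', Set.toFinset_ofPred]
  omega

theorem card_le_multiplicityOne (hiso : ∀ i, 0 < G.degree i) {S : Finset (Fin n)}
    (hS : G.IsIndepSet S) : #S ≤ multiplicityOne G := by
  let L := Function.ExtendByZero.linearMap ℝ ((↑) : S → Fin n)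
  have hdim : Module.finrank ℝ L.range = #S := by
    rw [LinearMap.finrank_range_of_inj (Function.extend_injective Subtype.val_injective _)]
    simp
  have hsupp : ∀ x ∈ L.range, ∀ i ∉ S, x i = 0 := by
    rintro _ ⟨a, rfl⟩ i hi
    exact Function.extend_apply' _ _ _ (by simpa using hi)
  have hone : {k : Fin n | n - #S ≤ k.1} ⊆ {k : Fin n | ckSignless G (k.1 + 1) = 1} :=
    fun k (hk : n - #S ≤ k.1) => ckSignless_eq_one_of_submodule hiso k.2 (W := L.range)
      (by omega) fun x hx i j hij => by
        by_cases hi : i ∈ S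
        · have hj : j ∉ S := fun hj => hS hi hj hij.ne hij
          rw [hsupp x hx j hj, mul_zero]
        · rw [hsupp x hx i hi, zero_mul]
  have hcard : #S ≤ n := by simpa using S.card_le_univ
  have hle := Set.ncard_le_ncard hone
  rw [ncard_setOf_le_val] at hle
  exact (Nat.sub_sub_self hcard).ge.trans hle

theorem multiplicityOne_add_le (hiso : ∀ i, 0 < G.degree i) {m : ℕ} (hm : HasMatching G m) :
    multiplicityOne G + m ≤ n := by
  have hmn : 2 * m ≤ n := by simpa using hm.two_mul_le
  obtain ⟨u, v, hinj, hadj⟩ := hm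
  have hu : Function.Injective u := hinj.comp Sum.inl_injective
  have hv : Function.Injective v := hinj.comp Sum.inr_injective
  have huv : ∀ s t, u s ≠ v t := fun s t h => Sum.inl_ne_inr (hinj h)
  let L := Function.ExtendByZero.linearMap ℝ u - Function.ExtendByZero.linearMap ℝ v
  have hL : ∀ a i, L a i = Function.extend u a 0 i - Function.extend v a 0 i := fun _ _ => rfl
  have hLu : ∀ a t, L a (u t) = a t := fun a t => by
    rw [hL, hu.extend_apply, Function.extend_apply' _ _ _ fun ⟨s, hs⟩ => huv t s hs.symm,
      Pi.zero_apply, sub_zero]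
  have hLv : ∀ a t, L a (v t) = -a t := fun a t => by
    rw [hL, hv.extend_apply, Function.extend_apply' _ _ _ fun ⟨s, hs⟩ => huv s t hs,
      Pi.zero_apply, zero_sub]
  have hdim : Module.finrank ℝ L.range = m := by
    rw [LinearMap.finrank_range_of_inj fun a b hab =>
      funext fun t => by rw [← hLu a, hab, hLu]]
    simp
  have hge : {k : Fin n | ckSignless G (k.1 + 1) = 1} ⊆ {k : Fin n | m ≤ k.1} := by
    intro k (hk : ckSignless G (k.1 + 1) = 1)
    by_contra! hkm
    refine (ckSignless_lt_one_of_submodule hiso k.1.succ_pos (W := L.range)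
      (by rw [hdim]; simpa using hkm) ?_).ne hk
    rintro _ ⟨a, rfl⟩ ha
    obtain ⟨t, ht⟩ := Function.ne_iff.1 fun h0 : a = 0 => ha (by rw [h0, map_zero])
    exact ⟨u t, v t, hadj t, by rw [hLu, hLv]; simpa using ht⟩
  have hle := Set.ncard_le_ncard hge
  rw [ncard_setOf_le_val] at hle
  rw [multiplicityOne]
  omega

end Multiplicity

theorem stmt11_general (G : SimpleGraph (Fin n)) [DecidableRel G.Adj]
    (hiso : ∀ i, 0 < G.degree i) :
    (indepNum G ≤ Set.ncard {k : Fin n | ckSignless G (k.1 + 1) = 1} ∧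
      Set.ncard {k : Fin n | ckSignless G (k.1 + 1) = 1} ≤ edgeCoverNum G) ∧
    (G.Colorable 2 →
      Set.ncard {k : Fin n | ckSignless G (k.1 + 1) = 1} = indepNum G) := by
  change (indepNum G ≤ multiplicityOne G ∧ multiplicityOne G ≤ edgeCoverNum G) ∧
    (G.Colorable 2 → multiplicityOne G = indepNum G)
  have hα : indepNum G ≤ multiplicityOne G := by
    obtain ⟨S, hS⟩ := G.exists_isNIndepSet_indepNum
    rw [indepNum_eq, ← hS.card_eq]
    exact card_le_multiplicityOne hiso hS.isIndepSet
  refine ⟨⟨hα, ?_⟩, fun hG => hα.antisymm' ?_⟩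
  · obtain ⟨F, hF, hcover, hcard⟩ := exists_edgeCover_card_eq_edgeCoverNum hiso
    obtain ⟨m, hm, hn⟩ := exists_hasMatching_card_le_edgeCover_add hF hcover
    have hadd := multiplicityOne_add_le hiso hm
    rw [Fintype.card_fin] at hn
    omega
  · obtain ⟨m, hm, hn⟩ := exists_hasMatching_card_le_add_indepNum hG
    have hadd := multiplicityOne_add_le hiso hm
    rw [Fintype.card_fin, ← indepNum_eq] at hn
    omega

theorem stmt11 (G : SimpleGraph (Fin n)) [DecidableRel G.Adj]
    (hiso : ∀ i, 0 < G.degree i) :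
    (indepNum G ≤ Set.ncard {k : Fin n | ckSignless G (k.1 + 1) = 1} ∧
      Set.ncard {k : Fin n | ckSignless G (k.1 + 1) = 1} ≤ edgeCoverNum G) ∧
    (G.Connected → G.Colorable 2 →
      Set.ncard {k : Fin n | ckSignless G (k.1 + 1) = 1} = indepNum G) :=
  ⟨(stmt11_general G hiso).1, fun _ => (stmt11_general G hiso).2⟩
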